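/- arXiv:2503.13317 — 3 statements merged into one kernel-verified Lean document; each statement's English description precedes it below -/
import Mathlib

section
/- Let 𝒳 be a measurable space, ν a probability measure on 𝒳, and κ : 𝒳 → Measure ℝ a measurable family of probability measures, each with finite second moment, with m(x') = ∫ y ∂(κ x') and with m and m² ν-integrable. Let π = ν.bind (fun x' => (κ x').prod (κ x')) be the model joint predictive on ℝ × ℝ, and assume y₁, y₂ and y₁·y₂ are π-integrable. Then the model covariance between the two predicted labels equals the variance of the true conditional means under ν: ∫ y₁·y₂ ∂π − (∫ y₁ ∂π)·(∫ y₂ ∂π) = ∫ m(x')² ∂ν(x') − (∫ m(x') ∂ν(x'))². (In the paper's notation: C_θ[Y₁,Y₂|x] = V[E[Y|X] | [x]], i.e. the model covariance equals the grouping loss / epistemic uncertainty.) -/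
open MeasureTheory

/-- Integrating against the mixture over `ν` of the conditional pair distributions
is integrating first against each pair distribution and then against `ν`. -/
theorem integral_bind_prod_self {𝒳 β E : Type*} [MeasurableSpace 𝒳] [MeasurableSpace β]
    [NormedAddCommGroup E] [NormedSpace ℝ E]
    (ν : Measure 𝒳) (κ : 𝒳 → Measure β) (hκ : Measurable κ)
    (hκprob : ∀ x, IsProbabilityMeasure (κ x)) {f : β × β → E}
    (hf : Integrable f (ν.bind (fun x => (κ x).prod (κ x)))) :
    ∫ p, f p ∂(ν.bind (fun x => (κ x).prod (κ x))) =
      ∫ x, ∫ p, f p ∂((κ x).prod (κ x)) ∂ν := by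
  let K : ProbabilityTheory.Kernel 𝒳 β := ⟨κ, hκ⟩
  have : ProbabilityTheory.IsMarkovKernel K := ⟨hκprob⟩
  have hK : (fun x => (κ x).prod (κ x)) = ⇑(K.prod K) :=
    funext fun x => (ProbabilityTheory.Kernel.prod_apply K K x).symm
  rw [hK] at hf ⊢
  simp_rw [congrFun hK]
  exact ProbabilityTheory.Kernel.integral_comp
    (κ := ProbabilityTheory.Kernel.const Unit ν) (a := ()) hf

/-- **Model covariance equals grouping loss.**
For a model calibrated at predicting pairs of conditionally iid labels, with
joint predictive `π = ν.bind (fun x' => (κ x').prod (κ x'))`, the covariance of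
the two predicted labels equals the variance of the true conditional means
under `ν`: `C_θ[Y₁,Y₂|x] = V[E[Y|X] | [x]]`. -/
theorem model_covariance_eq_grouping_loss
    {𝒳 : Type*} [MeasurableSpace 𝒳]
    (ν : Measure 𝒳) [IsProbabilityMeasure ν]
    (κ : 𝒳 → Measure ℝ) (hκ : Measurable κ)
    (hκprob : ∀ x', IsProbabilityMeasure (κ x'))
    (hκmom : ∀ x', Integrable (fun y : ℝ => y ^ 2) (κ x'))
    (hmean : Integrable (fun x' => ∫ y, y ∂(κ x')) ν)
    (hmeansq : Integrable (fun x' => (∫ y, y ∂(κ x')) ^ 2) ν)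
    (hπ1 : Integrable (fun p : ℝ × ℝ => p.1) (ν.bind (fun x' => (κ x').prod (κ x'))))
    (hπ2 : Integrable (fun p : ℝ × ℝ => p.2) (ν.bind (fun x' => (κ x').prod (κ x'))))
    (hπ12 : Integrable (fun p : ℝ × ℝ => p.1 * p.2) (ν.bind (fun x' => (κ x').prod (κ x')))) :
    (∫ p : ℝ × ℝ, p.1 * p.2 ∂(ν.bind (fun x' => (κ x').prod (κ x')))) -
        (∫ p : ℝ × ℝ, p.1 ∂(ν.bind (fun x' => (κ x').prod (κ x')))) *
          (∫ p : ℝ × ℝ, p.2 ∂(ν.bind (fun x' => (κ x').prod (κ x')))) =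
      (∫ x', (∫ y, y ∂(κ x')) ^ 2 ∂ν) - (∫ x', (∫ y, y ∂(κ x')) ∂ν) ^ 2 := by
  rw [integral_bind_prod_self ν κ hκ hκprob hπ1, integral_bind_prod_self ν κ hκ hκprob hπ2,
    integral_bind_prod_self ν κ hκ hκprob hπ12]
  have hfst (x : 𝒳) : ∫ p : ℝ × ℝ, p.1 ∂((κ x).prod (κ x)) = ∫ y, y ∂(κ x) := by
    simpa using integral_fun_fst (μ := κ x) (ν := κ x) (fun y : ℝ => y)
  have hsnd (x : 𝒳) : ∫ p : ℝ × ℝ, p.2 ∂((κ x).prod (κ x)) = ∫ y, y ∂(κ x) := by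
    simpa using integral_fun_snd (μ := κ x) (ν := κ x) (fun y : ℝ => y)
  have hmul (x : 𝒳) :
      ∫ p : ℝ × ℝ, p.1 * p.2 ∂((κ x).prod (κ x)) = (∫ y, y ∂(κ x)) ^ 2 := by
    rw [sq]
    exact integral_prod_mul (fun y : ℝ => y) (fun y : ℝ => y)
  simp_rw [hfst, hsnd, hmul, sq]
end

section
/- Let 𝒳 be a measurable space, ν a probability measure on 𝒳, and f : 𝒳 → ℝ → ℝ a measurable nonnegative function such that for each x' the measure κ x' with Lebesgue density f x' is a probability measure with finite second moment; write m(x') = ∫ y · f x' y dy for the conditional mean, and assume all the following integrals exist and Fubini's theorem applies. Define the covariance operator kernel Σ(y₁, y₂) = ∫ f x' y₁ · f x' y₂ ∂ν(x') − (∫ f x' y₁ ∂ν(x'))·(∫ f x' y₂ ∂ν(x')). Then integrating this kernel against y₁·y₂ recovers the variance of the conditional means: ∫∫ Σ(y₁, y₂) · y₁ · y₂ dy₁ dy₂ = ∫ m(x')² ∂ν(x') − (∫ m(x') ∂ν(x'))². (In the paper's notation: ∫∫ Σ^θ_{y₁,y₂}(x) y₁ y₂ dy₁ dy₂ = V[E[Y|X]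 | [x]] = cov_θ(x).) -/
open MeasureTheory

/-- **Integral of the covariance operator kernel.**
For a pair-calibrated model whose conditional laws have Lebesgue densities
`f x'`, the covariance operator kernel is
`Σ(y₁,y₂) = ∫ f x' y₁ · f x' y₂ ∂ν − (∫ f x' y₁ ∂ν)(∫ f x' y₂ ∂ν)`.
Integrating it against `y₁ · y₂` recovers the variance of the conditional
means `m(x') = ∫ y · f x' y dy`:
`∫∫ Σ(y₁,y₂) y₁ y₂ dy₁ dy₂ = V[E[Y|X] | [x]]`. -/
theorem covariance_operator_integral
    {𝒳 : Type*} [MeasurableSpace 𝒳]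
    (ν : Measure 𝒳) [IsProbabilityMeasure ν]
    (f : 𝒳 → ℝ → ℝ)
    (hf : Measurable (Function.uncurry f))
    (hf_nonneg : ∀ x' y, 0 ≤ f x' y)
    -- each `f x'` is a probability density with finite second moment
    (hf_prob : ∀ x', IsProbabilityMeasure (volume.withDensity (fun y => ENNReal.ofReal (f x' y))))
    (hf_mom1 : ∀ x', Integrable (fun y => y * f x' y) volume)
    (hf_mom2 : ∀ x', Integrable (fun y => y ^ 2 * f x' y) volume)
    -- integrability of the conditional means
    (hm : Integrable (fun x' => ∫ y, y * f x' y) ν)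
    (hm2 : Integrable (fun x' => (∫ y, y * f x' y) ^ 2) ν)
    -- joint integrability licensing Fubini's theorem
    (hFub1 : Integrable (fun q : ℝ × 𝒳 => q.1 * f q.2 q.1) (volume.prod ν))
    (hFub2 : Integrable
      (fun q : (ℝ × ℝ) × 𝒳 => f q.2 q.1.1 * f q.2 q.1.2 * q.1.1 * q.1.2)
      ((volume.prod volume).prod ν))
    (hSigma : Integrable
      (fun p : ℝ × ℝ =>
        ((∫ x', f x' p.1 * f x' p.2 ∂ν) -
            (∫ x', f x' p.1 ∂ν) * (∫ x', f x' p.2 ∂ν)) * p.1 * p.2)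
      (volume.prod volume)) :
    (∫ y₁, ∫ y₂,
        ((∫ x', f x' y₁ * f x' y₂ ∂ν) -
            (∫ x', f x' y₁ ∂ν) * (∫ x', f x' y₂ ∂ν)) * y₁ * y₂) =
      (∫ x', (∫ y, y * f x' y) ^ 2 ∂ν) - (∫ x', (∫ y, y * f x' y) ∂ν) ^ 2 := by
  have hA : Integrable
      (fun p : ℝ × ℝ => ∫ x', f x' p.1 * f x' p.2 * p.1 * p.2 ∂ν) (volume.prod volume) :=
    hFub2.integral_prod_left
  have hg : Integrable (fun y : ℝ => ∫ x', y * f x' y ∂ν) volume := hFub1.integral_prod_left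
  have hB : Integrable
      (fun p : ℝ × ℝ => (∫ x', p.1 * f x' p.1 ∂ν) * ∫ x', p.2 * f x' p.2 ∂ν)
      (volume.prod volume) := hg.mul_prod hg
  have hsplit : ∀ p : ℝ × ℝ,
      ((∫ x', f x' p.1 * f x' p.2 ∂ν) -
          (∫ x', f x' p.1 ∂ν) * (∫ x', f x' p.2 ∂ν)) * p.1 * p.2 =
        (∫ x', f x' p.1 * f x' p.2 * p.1 * p.2 ∂ν) -
          (∫ x', p.1 * f x' p.1 ∂ν) * ∫ x', p.2 * f x' p.2 ∂ν := by
    intro p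
    simp only [integral_mul_const, integral_const_mul]
    ring
  have hA_eq : ∫ p : ℝ × ℝ, (∫ x', f x' p.1 * f x' p.2 * p.1 * p.2 ∂ν) ∂(volume.prod volume) =
      ∫ x', (∫ y, y * f x' y) ^ 2 ∂ν := by
    rw [integral_integral_swap hFub2]
    refine integral_congr_ae (ae_of_all _ fun x' => ?_)
    simp only [sq]
    rw [← integral_prod_mul]
    refine integral_congr_ae (ae_of_all _ fun p => ?_)
    ring
  have hg_eq : ∫ y : ℝ, (∫ x', y * f x' y ∂ν) = ∫ x', (∫ y, y * f x' y) ∂ν :=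
    integral_integral_swap hFub1
  rw [← integral_prod _ hSigma, integral_congr_ae (ae_of_all _ hsplit), integral_sub hA hB, hA_eq,
    integral_prod_mul (fun y : ℝ => ∫ x', y * f x' y ∂ν) (fun y : ℝ => ∫ x', y * f x' y ∂ν),
    hg_eq, sq (∫ x', (∫ y, y * f x' y) ∂ν)]
end

section
/- Let 𝒳 be a measurable space, ν a probability measure on 𝒳, and κ : 𝒳 → Measure ℝ a measurable family of probability measures with finite first moments; write m(x') = ∫ y ∂(κ x'), assume m and m² are ν-integrable, and let μ = ∫ m ∂ν. Then the expected product of deviations of two conditionally iid labels from the model mean equals the variance of the conditional means: ∫ (∫∫ (μ − y₁)(μ − y₂) ∂(κ x')(y₁) ∂(κ x')(y₂)) ∂ν(x') = ∫ m(x')² ∂ν(x') − (∫ m(x') ∂ν(x'))². Hence for a covariance-calibrated pair model whose data distribution factorizes as p(y₁,y₂|x') = p(y₁|x')p(y₂|x'), the off-diagonal term of the calibrated covariance matrix satisfies cov_θ(x) = V[E[Y|X] | [x]_c]. -/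
open MeasureTheory

/-- The mean product of deviations from `c` of two independent copies with law `P` is the squared
deviation of the mean of `P`. -/
lemma integral_integral_sub_mul_sub (P : Measure ℝ) [IsProbabilityMeasure P]
    (hP : Integrable (fun y : ℝ => y) P) (c : ℝ) :
    ∫ y₂, (∫ y₁, (c - y₁) * (c - y₂) ∂P) ∂P = (c - ∫ y, y ∂P) ^ 2 := by
  have h : ∫ y, (c - y) ∂P = c - ∫ y, y ∂P := by
    simp [integral_sub (integrable_const c) hP]
  simp only [integral_mul_const, integral_const_mul, h, sq]

/-- The mean squared deviation of `f` from its mean, expanded. -/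
lemma integral_sq_integral_sub {α : Type*} [MeasurableSpace α] (P : Measure α)
    [IsProbabilityMeasure P] {f : α → ℝ} (hf : Integrable f P)
    (hf2 : Integrable (fun x => f x ^ 2) P) :
    ∫ x, ((∫ z, f z ∂P) - f x) ^ 2 ∂P = (∫ x, f x ^ 2 ∂P) - (∫ x, f x ∂P) ^ 2 := by
  set c := ∫ z, f z ∂P with hc
  have h : ∀ x, (c - f x) ^ 2 = f x ^ 2 - (2 * c * f x - c ^ 2) := fun x => by ring
  simp only [h]
  have hlin : Integrable (fun x => 2 * c * f x - c ^ 2) P :=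
    (hf.const_mul _).sub (integrable_const _)
  rw [integral_sub hf2 hlin,
    integral_sub (hf.const_mul _) (integrable_const _), integral_const_mul, ← hc]
  simp only [integral_const, probReal_univ, one_smul]
  ring

/-- **Covariance calibration: off-diagonal term equals the grouping loss.**
With `m x' = ∫ y ∂(κ x')` and `μ = ∫ m ∂ν`, the expected product of deviations
of two conditionally iid labels from the model mean equals the variance of the
conditional means:
`∫∫∫ (μ − y₁)(μ − y₂) ∂(κ x')(y₁) ∂(κ x')(y₂) ∂ν = V[E[Y|X] | [x]_c]`.
Hence for a covariance-calibrated pair model with conditionally iid labels,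
the off-diagonal term of the calibrated covariance matrix satisfies
`cov_θ(x) = V[E[Y|X] | [x]_c]`. -/
theorem covariance_calibration_off_diagonal
    {𝒳 : Type*} [MeasurableSpace 𝒳]
    (ν : Measure 𝒳) [IsProbabilityMeasure ν]
    (κ : 𝒳 → Measure ℝ) (hκ : Measurable κ)
    (hκprob : ∀ x', IsProbabilityMeasure (κ x'))
    (hκmom : ∀ x', Integrable (fun y : ℝ => y) (κ x'))
    (hm : Integrable (fun x' => ∫ y, y ∂(κ x')) ν)
    (hm2 : Integrable (fun x' => (∫ y, y ∂(κ x')) ^ 2) ν) :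
    (∫ x', (∫ y₂, (∫ y₁,
        ((∫ x'', (∫ z, z ∂(κ x'')) ∂ν) - y₁) *
          ((∫ x'', (∫ z, z ∂(κ x'')) ∂ν) - y₂) ∂(κ x')) ∂(κ x')) ∂ν) =
      (∫ x', (∫ y, y ∂(κ x')) ^ 2 ∂ν) - (∫ x', (∫ y, y ∂(κ x')) ∂ν) ^ 2 := by
  simp only [integral_integral_sub_mul_sub _ (hκmom _)]
  exact integral_sq_integral_sub ν hm hm2
end
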